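/- Let a^1, ..., a^k be pairwise linearly independent vectors in ℝ^n, let s ≥ 0 be an integer, and suppose a function f ∈ C^s(ℝ^n) has the form f(x) = ∑_{i=1}^k f_i(a^i·x), where f_1, ..., f_k : ℝ → ℝ are arbitrarily behaved functions. Then there exist functions g_1, ..., g_k ∈ C^s(ℝ) and a polynomial P : ℝ^n → ℝ of total degree at most k − 1 such that f(x) = ∑_{i=1}^k g_i(a^i·x) + P(x) for all x ∈ ℝ^n. -/

import Mathlib

/-!
Say that a function has order `m` if all its mixed differences with `m` steps vanish. Let
`f x = ∑ i, F i (a i ⬝ᵥ x)` with `m + 1` directions. Differencing `f` with `m` steps, each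
orthogonal to one of the directions other than `a i`, leaves only a mixed difference of `F i`;
hence that mixed difference is `Cˢ` in its steps and base point jointly.

Such an `F i` differs from a `Cˢ` function `g i` by a function of order `m`. To see this, induct
on `m` and write `F = (F - J F) + J F`, with `J` the Steklov average over unit intervals. Since
`F - J F` averages first differences of `F`, its differences with one step fewer are already
`Cˢ`, so by induction it is `Cˢ` up to order `m - 1`. For the same reason so is `Δ_[1] F`, and
`J F` has derivative `Δ_[1] F` to within the same accuracy, so `J F` is a primitive of a `Cˢ`
function up to order `m`. Here `F` need not be measurable, so `J` is extended linearly to all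
functions.

The remainder `f x - ∑ i, g i (a i ⬝ᵥ x)` is continuous of order `m`. Convolution with a bump
function changes it by a function of order `m - 1`, so by induction it is smooth; then its
`m`-th derivative vanishes and Taylor's formula shows that it is a polynomial of degree less
than `m`.
-/

open MeasureTheory
open scoped fwdDiff ContDiff Convolution

section MixedDiff

variable {M N G : Type*} [AddCommGroup M] [AddCommGroup N] [AddCommGroup G] {m : ℕ}

lemma fwdDiff_comm (h k : M) (F : M → G) : Δ_[h] (Δ_[k] F) = Δ_[k] (Δ_[h] F) := by
  ext x
  simp only [fwdDiff, add_right_comm]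
  abel

/-- The mixed difference `Δ_[t 0] ⋯ Δ_[t (m - 1)] F` of order `m` with steps `t`. -/
def mixedDiff (t : Fin m → M) (F : M → G) : M → G :=
  (List.ofFn fun j => fwdDiff_aux.fwdDiffₗ M G (t j)).prod F

lemma mixedDiff_of_isEmpty (t : Fin 0 → M) (F : M → G) : mixedDiff t F = F := by
  simp [mixedDiff]

lemma mixedDiff_cons (h : M) (t : Fin m → M) (F : M → G) :
    mixedDiff (Fin.cons h t : Fin (m + 1) → M) F = Δ_[h] (mixedDiff t F) := by
  simp only [mixedDiff, List.ofFn_succ, Fin.cons_zero, Fin.cons_succ, List.prod_cons]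
  rfl

lemma mixedDiff_add (t : Fin m → M) (F F' : M → G) :
    mixedDiff t (F + F') = mixedDiff t F + mixedDiff t F' :=
  map_add _ F F'

lemma mixedDiff_sub (t : Fin m → M) (F F' : M → G) :
    mixedDiff t (F - F') = mixedDiff t F - mixedDiff t F' :=
  map_sub _ F F'

lemma mixedDiff_sum {κ : Type*} (S : Finset κ) (t : Fin m → M) (F : κ → M → G) :
    mixedDiff t (∑ i ∈ S, F i) = ∑ i ∈ S, mixedDiff t (F i) :=
  map_sum _ F S

lemma mixedDiff_fwdDiff (h : M) (t : Fin m → M) (F : M → G) :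
    mixedDiff t (Δ_[h] F) = Δ_[h] (mixedDiff t F) := by
  induction t using Fin.consInduction with
  | elim0 => simp only [mixedDiff_of_isEmpty]
  | cons k t ih => simp only [mixedDiff_cons, ih, fwdDiff_comm]

lemma mixedDiff_comp (L : M →+ N) (t : Fin m → M) (F : N → G) :
    mixedDiff t (F ∘ L) = mixedDiff (L ∘ t) F ∘ L := by
  induction t using Fin.consInduction with
  | elim0 => simp only [mixedDiff_of_isEmpty]
  | cons h t ih =>
    ext x
    simp [Fin.comp_cons, mixedDiff_cons, ih, fwdDiff]

lemma mixedDiff_eq_zero_of_apply_eq_zero {t : Fin m → M} {j : Fin m} (h : t j = 0) (F : M → G) :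
    mixedDiff t F = 0 := by
  have hj : fwdDiff_aux.fwdDiffₗ M G (t j) = 0 := by
    ext F x
    simp [h, fwdDiff]
  rw [mixedDiff, List.prod_eq_zero (List.mem_ofFn.2 ⟨j, hj⟩), LinearMap.zero_apply]

lemma mixedDiff_succ_eq_zero {F : M → G} (h : ∀ t : Fin m → M, mixedDiff t F = 0)
    (t : Fin (m + 1) → M) : mixedDiff t F = 0 := by
  rw [← Fin.cons_self_tail t, mixedDiff_cons, h]
  exact fwdDiff_const _ 0

lemma forall_mixedDiff_succ_eq_zero_iff {F : M → G} :
    (∀ t : Fin (m + 1) → M, mixedDiff t F = 0) ↔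
      ∀ (t : Fin m → M) (x : M), mixedDiff t F x = mixedDiff t F 0 := by
  refine ⟨fun h t x => ?_, fun h t => ?_⟩
  · have := congrFun (h (Fin.cons x t)) 0
    simpa [mixedDiff_cons, fwdDiff, sub_eq_zero] using this
  · ext x
    rw [← Fin.cons_self_tail t, mixedDiff_cons, fwdDiff, h, h _ x, sub_self, Pi.zero_apply]

lemma mixedDiff_apply_eq_add (t : Fin m → M) (F : M → G) (x y : M) :
    mixedDiff t F (x + y) = mixedDiff (Fin.cons y t : Fin (m + 1) → M) F x + mixedDiff t F x := by
  rw [mixedDiff_cons, fwdDiff, sub_add_cancel]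

end MixedDiff

section Regularity

lemma continuous_mixedDiff_of_succ {M G : Type*} [AddCommGroup M] [TopologicalSpace M]
    [AddCommGroup G] [TopologicalSpace G] [ContinuousAdd G] {m : ℕ} {F : M → G}
    (h : Continuous fun p : (Fin (m + 1) → M) × M => mixedDiff p.1 F p.2) (t : Fin m → M) :
    Continuous (mixedDiff t F) := by
  have hadd (x : M) : mixedDiff t F x =
      mixedDiff (Fin.cons x t : Fin (m + 1) → M) F 0 + mixedDiff t F 0 := by
    rw [← mixedDiff_apply_eq_add, zero_add]
  have hcons : Continuous fun x : M => ((Fin.cons x t : Fin (m + 1) → M), (0 : M)) := by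
    fun_prop
  rw [funext hadd]
  exact (h.comp hcons).add continuous_const

variable {E G : Type*} [NormedAddCommGroup E] [NormedSpace ℝ E] [NormedAddCommGroup G]
  [NormedSpace ℝ G] {m : ℕ}

lemma contDiff_finCons {s : ℕ∞} :
    ContDiff ℝ s fun p : E × (Fin m → E) => (Fin.cons p.1 p.2 : Fin (m + 1) → E) :=
  (Fin.consEquivL ℝ fun _ : Fin (m + 1) => E).contDiff

lemma contDiff_mixedDiff {s : ℕ∞} {F : E → G} (hF : ContDiff ℝ s F) :
    ContDiff ℝ s fun p : (Fin m → E) × E => mixedDiff p.1 F p.2 := by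
  induction m with
  | zero => simpa only [mixedDiff_of_isEmpty] using! hF.comp contDiff_snd
  | succ m ih =>
    have hrec (p : (Fin (m + 1) → E) × E) : mixedDiff p.1 F p.2 =
        mixedDiff (Fin.tail p.1) F (p.2 + p.1 0) - mixedDiff (Fin.tail p.1) F p.2 := by
      conv_lhs => rw [← Fin.cons_self_tail p.1, mixedDiff_cons, fwdDiff]
    have htail : ContDiff ℝ s fun p : (Fin (m + 1) → E) × E => Fin.tail p.1 := by
      unfold Fin.tail
      fun_prop
    have hshift : ContDiff ℝ s fun p : (Fin (m + 1) → E) × E => p.2 + p.1 0 := by fun_prop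
    simp only [hrec]
    exact (ih.comp (htail.prodMk hshift)).sub (ih.comp (htail.prodMk contDiff_snd))

lemma hasLineDerivAt_mixedDiff {F F' : E → G} {v : E} (h : ∀ x, HasLineDerivAt ℝ F (F' x) x v)
    (t : Fin m → E) (x : E) : HasLineDerivAt ℝ (mixedDiff t F) (mixedDiff t F' x) x v := by
  induction t using Fin.consInduction generalizing x with
  | elim0 => simpa only [mixedDiff_of_isEmpty] using h x
  | cons k t ih =>
    have hk : HasLineDerivAt ℝ (fun y => mixedDiff t F (y + k)) (mixedDiff t F' (x + k)) x v := by
      simpa only [HasLineDerivAt, add_right_comm] using ih (x + k)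
    simp only [mixedDiff_cons]
    exact HasDerivAt.fun_sub hk (ih x)

lemma hasLineDerivAt_one_iff_hasDerivAt {f : ℝ → G} {f' : G} {x : ℝ} :
    HasLineDerivAt ℝ f f' x 1 ↔ HasDerivAt f f' x := by
  simp [hasLineDerivAt_iff_isLittleO_nhds_zero, hasDerivAt_iff_isLittleO_nhds_zero]

lemma contDiff_intervalIntegral_zero_one {H : Type*} [NormedAddCommGroup H] [NormedSpace ℝ H]
    [CompleteSpace G] {s : ℕ∞} {c : H → ℝ → G} (hc : ContDiff ℝ s (Function.uncurry c)) :
    ContDiff ℝ s fun x => ∫ u in (0 : ℝ)..1, c x u := by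
  -- The integral is a convolution; the cutoff `χ` only serves to give `c x` compact support.
  let χ : ContDiffBump (0 : ℝ) := ⟨1, 2, one_pos, one_lt_two⟩
  have hconv (x : H) : ∫ u in (0 : ℝ)..1, c x u =
      ((Set.Ioc (0 : ℝ) 1).indicator (fun _ => (1 : ℝ)) ⋆[ContinuousLinearMap.lsmul ℝ ℝ, volume]
        fun u => χ u • c x (-u)) 0 := by
    rw [convolution, intervalIntegral.integral_of_le zero_le_one,
      ← integral_indicator measurableSet_Ioc]
    congr 1 with u
    by_cases hu : u ∈ Set.Ioc (0 : ℝ) 1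
    · have : χ (-u) = 1 :=
        χ.one_of_mem_closedBall (by simpa [abs_of_pos hu.1, χ] using hu.2)
      simp [hu, this]
    · simp [hu]
  rw [funext hconv, ← contDiffOn_univ]
  refine contDiffOn_convolution_right_with_param_comp (ContinuousLinearMap.lsmul ℝ ℝ)
    contDiffOn_const isOpen_univ (isCompact_closedBall 0 2) (fun x u _ hu => ?_)
    ((integrable_indicator_iff measurableSet_Ioc).2 (by simp)).locallyIntegrable ?_
  · rw [χ.zero_of_le_dist (not_le.1 hu).le, zero_smul]
  · exact ((χ.contDiff.comp contDiff_snd).smul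
      (hc.comp (contDiff_fst.prodMk contDiff_snd.neg))).contDiffOn

lemma contDiff_succ_intervalIntegral [CompleteSpace G] {s : ℕ∞} {g : ℝ → G}
    (hg : ContDiff ℝ s g) (a : ℝ) : ContDiff ℝ (s + 1) fun x => ∫ u in a..x, g u := by
  have hderiv (x : ℝ) := (hg.continuous.integral_hasStrictDerivAt a x).hasDerivAt
  rw [contDiff_succ_iff_deriv, funext fun x => (hderiv x).deriv]
  exact ⟨fun x => (hderiv x).differentiableAt, by simp, hg⟩

end Regularity

section SteklovAverage

variable {G : Type*} [NormedAddCommGroup G] [NormedSpace ℝ G] {m : ℕ}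

/-- A linear projection of the space of all functions `X → G` onto the continuous ones, obtained
from a choice of linear complement. It lets us average functions that need not be measurable. -/
noncomputable def continuousProjection (X G : Type*) [TopologicalSpace X] [NormedAddCommGroup G]
    [NormedSpace ℝ G] : (X → G) →ₗ[ℝ] C(X, G) :=
  ((ContinuousMap.coeFnLinearMap ℝ).exists_leftInverse_of_injective
    (LinearMap.ker_eq_bot.2 DFunLike.coe_injective)).choose

lemma continuousProjection_of_continuous {X : Type*} [TopologicalSpace X] {F : X → G}
    (hF : Continuous F) : continuousProjection X G F = (⟨F, hF⟩ : C(X, G)) :=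
  LinearMap.congr_fun ((ContinuousMap.coeFnLinearMap ℝ).exists_leftInverse_of_injective
    (LinearMap.ker_eq_bot.2 DFunLike.coe_injective)).choose_spec (⟨F, hF⟩ : C(X, G))

/-- The Steklov average `x ↦ ∫ u in 0..1, F (x + u)`, extended to arbitrary functions `F` through
`continuousProjection` so that it still commutes with differences. -/
noncomputable def steklovAverage (F : ℝ → G) (x : ℝ) : G :=
  ∫ u in (0 : ℝ)..1, continuousProjection ℝ G (fun v => F (x + v)) u

lemma steklovAverage_apply {F : ℝ → G} (hF : Continuous F) (x : ℝ) :
    steklovAverage F x = ∫ u in (0 : ℝ)..1, F (x + u) := by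
  have hx : Continuous fun v => F (x + v) := by fun_prop
  rw [steklovAverage, continuousProjection_of_continuous hx, ContinuousMap.coe_mk]

lemma steklovAverage_fwdDiff (h : ℝ) (F : ℝ → G) :
    steklovAverage (Δ_[h] F) = Δ_[h] (steklovAverage F) := by
  ext x
  have hsub : (fun v => (Δ_[h] F) (x + v)) = (fun v => F (x + h + v)) - fun v => F (x + v) := by
    ext v
    simp [fwdDiff, add_right_comm]
  rw [steklovAverage, hsub, map_sub, fwdDiff, steklovAverage, steklovAverage,
    ← intervalIntegral.integral_sub]
  · rfl
  all_goals exact (ContinuousMap.continuous _).intervalIntegrable _ _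

lemma mixedDiff_steklovAverage (t : Fin m → ℝ) (F : ℝ → G) :
    mixedDiff t (steklovAverage F) = steklovAverage (mixedDiff t F) := by
  induction t using Fin.consInduction with
  | elim0 => simp only [mixedDiff_of_isEmpty]
  | cons h t ih => rw [mixedDiff_cons, mixedDiff_cons, ih, steklovAverage_fwdDiff]

variable [CompleteSpace G]

lemma hasDerivAt_steklovAverage {F : ℝ → G} (hF : Continuous F) (x : ℝ) :
    HasDerivAt (steklovAverage F) (Δ_[1] F x) x := by
  have hint (y : ℝ) : steklovAverage F y = ∫ u in y..(y + 1), F u := by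
    rw [steklovAverage_apply hF, intervalIntegral.integral_comp_add_left, add_zero]
  have hsplit (y : ℝ) : steklovAverage F y = (∫ u in (0 : ℝ)..(y + 1), F u) -
      ∫ u in (0 : ℝ)..y, F u := by
    rw [hint, intervalIntegral.integral_interval_sub_left] <;> exact hF.intervalIntegrable _ _
  rw [funext hsplit]
  exact ((hF.integral_hasStrictDerivAt 0 (x + 1)).hasDerivAt.comp_add_const x 1).fun_sub
    (hF.integral_hasStrictDerivAt 0 x).hasDerivAt

end SteklovAverage

section Smoothing

variable {G : Type*} [NormedAddCommGroup G] [NormedSpace ℝ G] [CompleteSpace G] {m : ℕ} {s : ℕ∞}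

lemma contDiff_mixedDiff_sub_steklovAverage {F : ℝ → G}
    (hF : ContDiff ℝ s fun p : (Fin (m + 1) → ℝ) × ℝ => mixedDiff p.1 F p.2) :
    ContDiff ℝ s fun p : (Fin m → ℝ) × ℝ => mixedDiff p.1 (F - steklovAverage F) p.2 := by
  have hintegral (p : (Fin m → ℝ) × ℝ) : mixedDiff p.1 (F - steklovAverage F) p.2 =
      -∫ u in (0 : ℝ)..1, mixedDiff (Fin.cons u p.1 : Fin (m + 1) → ℝ) F p.2 := by
    have hcont := continuous_mixedDiff_of_succ hF.continuous p.1
    have hshift : Continuous fun u => mixedDiff p.1 F (p.2 + u) := by fun_prop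
    simp only [mixedDiff_cons, fwdDiff]
    rw [mixedDiff_sub, Pi.sub_apply, mixedDiff_steklovAverage, steklovAverage_apply hcont,
      intervalIntegral.integral_sub (hshift.intervalIntegrable _ _) (by simp),
      intervalIntegral.integral_const, sub_zero, one_smul, neg_sub]
  have hcons : ContDiff ℝ s fun q : ((Fin m → ℝ) × ℝ) × ℝ =>
      ((Fin.cons q.2 q.1.1 : Fin (m + 1) → ℝ), q.1.2) :=
    (contDiff_finCons.comp (contDiff_snd.prodMk (contDiff_fst.comp contDiff_fst))).prodMk
      (contDiff_snd.comp contDiff_fst)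
  rw [funext hintegral]
  exact (contDiff_intervalIntegral_zero_one (hF.comp hcons)).neg

lemma mixedDiff_steklovAverage_sub_integral_eq_zero {F g : ℝ → G} (hg : Continuous g)
    (hF : ∀ t : Fin m → ℝ, Continuous (mixedDiff t F))
    (h : ∀ t : Fin m → ℝ, mixedDiff t (Δ_[1] F - g) = 0) (t : Fin (m + 1) → ℝ) :
    mixedDiff t (steklovAverage F - fun x => ∫ u in (0 : ℝ)..x, g u) = 0 := by
  refine forall_mixedDiff_succ_eq_zero_iff.2 (fun t x => ?_) t
  have hint (x : ℝ) : HasLineDerivAt ℝ (fun x => ∫ u in (0 : ℝ)..x, g u) (g x) x 1 :=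
    hasLineDerivAt_one_iff_hasDerivAt.2 (hg.integral_hasStrictDerivAt 0 x).hasDerivAt
  have havg (x : ℝ) : HasDerivAt (mixedDiff t (steklovAverage F)) (mixedDiff t g x) x := by
    have hx := congrFun (h t) x
    rw [mixedDiff_sub, mixedDiff_fwdDiff, Pi.sub_apply, Pi.zero_apply, sub_eq_zero] at hx
    rw [mixedDiff_steklovAverage, ← hx]
    exact hasDerivAt_steklovAverage (hF t) x
  have hderiv (x : ℝ) : HasDerivAt
      (mixedDiff t (steklovAverage F - fun x => ∫ u in (0 : ℝ)..x, g u)) 0 x := by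
    rw [mixedDiff_sub, ← sub_self (mixedDiff t g x)]
    exact (havg x).sub (hasLineDerivAt_one_iff_hasDerivAt.1 (hasLineDerivAt_mixedDiff hint t x))
  exact is_const_of_deriv_eq_zero (fun x => (hderiv x).differentiableAt)
    (fun x => (hderiv x).deriv) x 0

theorem exists_contDiff_mixedDiff_sub_eq_zero {F : ℝ → G}
    (hF : ContDiff ℝ s fun p : (Fin m → ℝ) × ℝ => mixedDiff p.1 F p.2) :
    ∃ g : ℝ → G, ContDiff ℝ s g ∧ ∀ t : Fin m → ℝ, mixedDiff t (F - g) = 0 := by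
  induction m generalizing F with
  | zero =>
    have hx : ContDiff ℝ s fun x : ℝ => ((Fin.elim0 : Fin 0 → ℝ), x) := by fun_prop
    refine ⟨F, by simpa only [mixedDiff_of_isEmpty] using! hF.comp hx, fun t => ?_⟩
    rw [sub_self, mixedDiff_of_isEmpty]
  | succ m ih =>
    obtain ⟨gA, hgA, hA⟩ := ih (contDiff_mixedDiff_sub_steklovAverage hF)
    have hcons : ContDiff ℝ s fun p : (Fin m → ℝ) × ℝ =>
        ((Fin.cons 1 p.1 : Fin (m + 1) → ℝ), p.2) :=
      (contDiff_finCons.comp (contDiff_const.prodMk contDiff_fst)).prodMk contDiff_snd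
    have hfwd : ContDiff ℝ s fun p : (Fin m → ℝ) × ℝ => mixedDiff p.1 (Δ_[1] F) p.2 := by
      simpa only [mixedDiff_fwdDiff, Function.comp_def, mixedDiff_cons] using hF.comp hcons
    obtain ⟨gB, hgB, hB⟩ := ih hfwd
    have hI := mixedDiff_steklovAverage_sub_integral_eq_zero hgB.continuous
      (continuous_mixedDiff_of_succ hF.continuous) hB
    refine ⟨gA + fun x => ∫ u in (0 : ℝ)..x, gB u, hgA.add ?_, fun t => ?_⟩
    · exact (contDiff_succ_intervalIntegral hgB 0).of_le le_self_add
    · have hsplit : F - (gA + fun x => ∫ u in (0 : ℝ)..x, gB u) =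
          (F - steklovAverage F - gA) + (steklovAverage F - fun x => ∫ u in (0 : ℝ)..x, gB u) := by
        abel
      rw [hsplit, mixedDiff_add, mixedDiff_succ_eq_zero hA, hI, add_zero]

end Smoothing

section Polynomial

variable {E G : Type*} [NormedAddCommGroup E] [NormedSpace ℝ E] [NormedAddCommGroup G]
  [NormedSpace ℝ G] {m : ℕ}

lemma fwdDiff_convolution {M : Type*} [AddCommGroup M] [MeasurableSpace M] {μ : Measure M}
    {φ : M → ℝ} {Q : M → G} (h : ConvolutionExists φ Q (ContinuousLinearMap.lsmul ℝ ℝ) μ) (k : M) :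
    Δ_[k] (φ ⋆[ContinuousLinearMap.lsmul ℝ ℝ, μ] Q) =
      φ ⋆[ContinuousLinearMap.lsmul ℝ ℝ, μ] (Δ_[k] Q) := by
  ext x
  rw [fwdDiff, convolution, convolution, ← integral_sub (h (x + k)) (h x), convolution]
  simp only [fwdDiff, map_sub, sub_add_eq_add_sub]

lemma mixedDiff_convolution [FiniteDimensional ℝ E] [MeasurableSpace E] [BorelSpace E]
    {μ : Measure E} [μ.IsAddHaarMeasure] {φ : E → ℝ} {Q : E → G} (hφ : Continuous φ)
    (hsupp : HasCompactSupport φ) (hQ : Continuous Q) (t : Fin m → E) :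
    mixedDiff t (φ ⋆[ContinuousLinearMap.lsmul ℝ ℝ, μ] Q) =
      φ ⋆[ContinuousLinearMap.lsmul ℝ ℝ, μ] (mixedDiff t Q) := by
  induction t using Fin.consInduction with
  | elim0 => simp only [mixedDiff_of_isEmpty]
  | cons k t ih =>
    have hcont : Continuous (mixedDiff t Q) :=
      (contDiff_mixedDiff (contDiff_zero.2 hQ)).continuous.comp (Continuous.prodMk_right t)
    rw [mixedDiff_cons, mixedDiff_cons, ih, fwdDiff_convolution]
    exact hsupp.convolutionExists_left _ hφ hcont.locallyIntegrable

lemma contDiff_of_mixedDiff_eq_zero [FiniteDimensional ℝ E] [CompleteSpace G] {Q : E → G}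
    (hQ : Continuous Q) (h : ∀ t : Fin m → E, mixedDiff t Q = 0) : ContDiff ℝ ∞ Q := by
  induction m generalizing Q with
  | zero =>
    have : Q = 0 := by simpa only [mixedDiff_of_isEmpty] using h Fin.elim0
    exact this ▸ contDiff_const
  | succ m ih =>
    borelize E
    let χ : ContDiffBump (0 : E) := ⟨1, 2, one_pos, one_lt_two⟩
    let φ := χ.normed Measure.addHaar
    have hφQ : ContDiff ℝ ∞ (φ ⋆[ContinuousLinearMap.lsmul ℝ ℝ, Measure.addHaar] Q) :=
      χ.hasCompactSupport_normed.contDiff_convolution_left _ χ.contDiff_normed hQ.locallyIntegrable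
    -- Differences with `m` steps are constant, hence unchanged by averaging.
    have hdiff (t : Fin m → E) :
        mixedDiff t (Q - φ ⋆[ContinuousLinearMap.lsmul ℝ ℝ, Measure.addHaar] Q) = 0 := by
      ext x
      have hconst := forall_mixedDiff_succ_eq_zero_iff.1 h t
      rw [mixedDiff_sub, mixedDiff_convolution χ.continuous_normed χ.hasCompactSupport_normed hQ,
        Pi.sub_apply, convolution]
      simp only [hconst x, hconst (x - _)]
      simp [integral_smul_const, χ.integral_normed]
    rw [← sub_add_cancel Q (φ ⋆[ContinuousLinearMap.lsmul ℝ ℝ, Measure.addHaar] Q)]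
    exact (ih (hQ.sub hφQ.continuous) hdiff).add hφQ

lemma iteratedFDeriv_eq_zero_of_mixedDiff_eq_zero {Q : E → G} (hQ : ContDiff ℝ ∞ Q)
    (h : ∀ t : Fin m → E, mixedDiff t Q = 0) : iteratedFDeriv ℝ m Q = 0 := by
  induction m generalizing Q with
  | zero =>
    have : Q = 0 := by simpa only [mixedDiff_of_isEmpty] using h Fin.elim0
    simp [this]
  | succ m ih =>
    have hfderiv : ContDiff ℝ ∞ (fderiv ℝ Q) := hQ.fderiv_right (by simp)
    have hline (v x : E) : HasLineDerivAt ℝ Q (fderiv ℝ Q x v) x v :=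
      (hQ.differentiable (by simp) x).hasFDerivAt.hasLineDerivAt v
    have hdir (v : E) : iteratedFDeriv ℝ m (fun x => fderiv ℝ Q x v) = 0 := by
      refine ih (hfderiv.clm_apply contDiff_const) fun t => ?_
      ext x
      refine (hasLineDerivAt_mixedDiff (hline v) t x).unique ?_
      simp only [HasLineDerivAt, forall_mixedDiff_succ_eq_zero_iff.1 h t (_ + _)]
      exact hasDerivAt_const _ _
    ext x w
    have hcomp : iteratedFDeriv ℝ m (fun y => fderiv ℝ Q y (w (Fin.last m))) x = _ :=
      (ContinuousLinearMap.apply ℝ G (w (Fin.last m))).iteratedFDeriv_comp_left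
        (hfderiv.contDiffAt (x := x)) (by exact_mod_cast le_top)
    have happly := congrArg (fun A => A (Fin.init w)) hcomp
    rw [hdir] at happly
    rw [iteratedFDeriv_succ_apply_right]
    exact happly.symm

lemma eq_sum_iteratedFDeriv_of_mixedDiff_eq_zero [FiniteDimensional ℝ E] [CompleteSpace G]
    {Q : E → G} (hQ : Continuous Q) (h : ∀ t : Fin m → E, mixedDiff t Q = 0) (x : E) :
    Q x = ∑ j ∈ Finset.range m, (j.factorial : ℝ)⁻¹ • iteratedFDeriv ℝ j Q 0 fun _ => x := by
  have hsmooth := contDiff_of_mixedDiff_eq_zero hQ h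
  cases m with
  | zero => simpa [mixedDiff_of_isEmpty] using congrFun (h Fin.elim0) x
  | succ m =>
    have htaylor := map_add_eq_sum_add_integral_iteratedFDeriv (f := Q) (x := 0) (y := x) (n := m)
      fun t _ => (hsmooth.of_le (by exact_mod_cast le_top)).contDiffAt
    simpa [iteratedFDeriv_eq_zero_of_mixedDiff_eq_zero hsmooth h] using htaylor

lemma exists_mvPolynomial_eval_eq_multilinearMap {ι R : Type*} [Finite ι] [CommSemiring R]
    (A : MultilinearMap R (fun _ : Fin m => ι → R) R) :
    ∃ P : MvPolynomial ι R, P.totalDegree ≤ m ∧ ∀ x, MvPolynomial.eval x P = A fun _ => x := by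
  classical
  cases nonempty_fintype ι
  refine ⟨∑ r : Fin m → ι, MvPolynomial.C (A fun i => Pi.single (r i) 1) *
    ∏ i, MvPolynomial.X (r i), ?_, fun x => ?_⟩
  · refine MvPolynomial.totalDegree_finsetSum_le fun r _ => ?_
    refine (MvPolynomial.totalDegree_mul _ _).trans ?_
    rw [MvPolynomial.totalDegree_C, zero_add]
    refine (MvPolynomial.totalDegree_finsetProd _ _).trans ?_
    refine (Finset.sum_le_card_nsmul _ _ 1 fun i _ => ?_).trans_eq (by simp)
    exact (MvPolynomial.totalDegree_monomial_le _ _).trans_eq (by simp)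
  · have hx : x = ∑ j, x j • (Pi.single j 1 : ι → R) := by
      ext l
      simp [Finset.sum_apply, Pi.single_apply]
    conv_rhs => rw [hx]
    rw [A.map_sum]
    simp [A.map_smul_univ, mul_comm]

theorem exists_mvPolynomial_eval_eq_of_mixedDiff_eq_zero {ι : Type*} [Finite ι]
    {Q : (ι → ℝ) → ℝ} (hQ : Continuous Q) (h : ∀ t : Fin m → ι → ℝ, mixedDiff t Q = 0) :
    ∃ P : MvPolynomial ι ℝ, P.totalDegree ≤ m - 1 ∧ ∀ x, Q x = MvPolynomial.eval x P := by
  cases nonempty_fintype ι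
  choose P hdeg heval using fun j =>
    exists_mvPolynomial_eval_eq_multilinearMap (iteratedFDeriv ℝ j Q 0).toMultilinearMap
  refine ⟨∑ j ∈ Finset.range m, (j.factorial : ℝ)⁻¹ • P j, ?_, fun x => ?_⟩
  · refine MvPolynomial.totalDegree_finsetSum_le fun j hj => ?_
    exact (MvPolynomial.totalDegree_smul_le _ _).trans
      ((hdeg j).trans (Nat.le_sub_one_of_lt (Finset.mem_range.1 hj)))
  · simp [eq_sum_iteratedFDeriv_of_mixedDiff_eq_zero hQ h x, heval]

end Polynomial

section Ridge

variable {ι : Type*} [Fintype ι]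

lemma surjective_dotProduct_of_linearIndependent {κ K : Type*} [Finite κ] [Field K]
    {v : κ → ι → K} (hv : LinearIndependent K v) :
    Function.Surjective fun (b : ι → K) (i : κ) => v i ⬝ᵥ b := by
  cases nonempty_fintype κ
  have hrange : LinearMap.range (Matrix.mulVecLin (Matrix.of v)) = ⊤ := by
    refine Submodule.eq_top_of_finrank_eq ?_
    rw [Module.finrank_fintype_fun_eq_card]
    exact LinearIndependent.rank_matrix hv
  exact LinearMap.range_eq_top.1 hrange

lemma mixedDiff_ridge {R G : Type*} [CommRing R] [AddCommGroup G] {m : ℕ} (a : ι → R)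
    (t : Fin m → ι → R) (F : R → G) :
    mixedDiff t (fun x => F (a ⬝ᵥ x)) = fun x => mixedDiff (fun j => a ⬝ᵥ t j) F (a ⬝ᵥ x) :=
  mixedDiff_comp (AddMonoidHom.mk' (a ⬝ᵥ ·) (dotProduct_add a)) t F

lemma mixedDiff_sum_ridge_of_dotProduct_eq_zero {R G : Type*} [CommRing R] [AddCommGroup G] {m : ℕ}
    {a : Fin (m + 1) → ι → R} (F : Fin (m + 1) → R → G) (i : Fin (m + 1)) {t : Fin m → ι → R}
    (ht : ∀ j, a (i.succAbove j) ⬝ᵥ t j = 0) (x : ι → R) :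
    mixedDiff t (∑ l, fun x => F l (a l ⬝ᵥ x)) x =
      mixedDiff (fun j => a i ⬝ᵥ t j) (F i) (a i ⬝ᵥ x) := by
  rw [mixedDiff_sum, Fin.sum_univ_succAbove _ i, Finset.sum_eq_zero, add_zero, mixedDiff_ridge]
  intro j _
  rw [mixedDiff_ridge, mixedDiff_eq_zero_of_apply_eq_zero (ht j)]
  rfl

lemma contDiff_dotProduct {s : ℕ∞} (a : ι → ℝ) : ContDiff ℝ s (a ⬝ᵥ ·) := by
  unfold dotProduct
  fun_prop

lemma contDiff_mixedDiff_of_sum_ridge {m : ℕ} {s : ℕ∞} {a : Fin (m + 1) → ι → ℝ}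
    (hind : ∀ i j, i ≠ j → LinearIndependent ℝ ![a i, a j]) {F : Fin (m + 1) → ℝ → ℝ}
    (hF : ContDiff ℝ s (∑ i, fun x => F i (a i ⬝ᵥ x))) {i : Fin (m + 1)} (hi : a i ≠ 0) :
    ContDiff ℝ s fun p : (Fin m → ℝ) × ℝ => mixedDiff p.1 (F i) p.2 := by
  have hdual (j : Fin m) : ∃ b, a i ⬝ᵥ b = 1 ∧ a (i.succAbove j) ⬝ᵥ b = 0 := by
    obtain ⟨b, hb⟩ := surjective_dotProduct_of_linearIndependent
      (hind i (i.succAbove j) (i.succAbove_ne j).symm) ![1, 0]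
    exact ⟨b, congrFun hb 0, congrFun hb 1⟩
  choose b hb hb' using hdual
  let c := (a i ⬝ᵥ a i)⁻¹ • a i
  have hc : a i ⬝ᵥ c = 1 := by
    rw [dotProduct_smul, smul_eq_mul, inv_mul_cancel₀ (dotProduct_self_eq_zero.not.2 hi)]
  have hF_eq (p : (Fin m → ℝ) × ℝ) : mixedDiff p.1 (F i) p.2 =
      mixedDiff (fun j => p.1 j • b j) (∑ l, fun x => F l (a l ⬝ᵥ x)) (p.2 • c) := by
    rw [mixedDiff_sum_ridge_of_dotProduct_eq_zero F i fun j => by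
      rw [dotProduct_smul, hb', smul_zero]]
    simp only [dotProduct_smul, hb, hc, smul_eq_mul, mul_one]
  have hsteps : ContDiff ℝ s fun p : (Fin m → ℝ) × ℝ =>
      ((fun j => p.1 j • b j : Fin m → ι → ℝ), p.2 • c) := by fun_prop
  rw [funext hF_eq]
  exact (contDiff_mixedDiff hF).comp hsteps

theorem stmt11_general {k : ℕ} {s : ℕ∞} (a : Fin k → ι → ℝ)
    (hind : ∀ i j, i ≠ j → LinearIndependent ℝ ![a i, a j]) {f : (ι → ℝ) → ℝ}
    (hf : ContDiff ℝ s f) (F : Fin k → ℝ → ℝ) (hrepr : ∀ x, f x = ∑ i, F i (a i ⬝ᵥ x)) :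
    ∃ (g : Fin k → ℝ → ℝ) (P : MvPolynomial ι ℝ), (∀ i, ContDiff ℝ s (g i)) ∧
      P.totalDegree ≤ k - 2 ∧ ∀ x, f x = ∑ i, g i (a i ⬝ᵥ x) + MvPolynomial.eval x P := by
  by_cases hzero : ∃ i, a i = 0
  · obtain ⟨i, hi⟩ := hzero
    have hall (j : Fin k) : a j = 0 := by
      by_contra hj
      exact (hind i j fun h => hj (h ▸ hi)).ne_zero 0 hi
    refine ⟨0, MvPolynomial.C (f 0), fun _ => contDiff_const, by simp, fun x => ?_⟩
    simp [hrepr, hall]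
  push Not at hzero
  cases k with
  | zero => exact ⟨0, 0, fun _ => contDiff_const, by simp, fun x => by simpa using hrepr x⟩
  | succ m =>
    obtain rfl : f = ∑ i, fun x => F i (a i ⬝ᵥ x) := by
      ext x
      rw [hrepr, Finset.sum_apply]
    choose g hg hgF using fun i => exists_contDiff_mixedDiff_sub_eq_zero
      (contDiff_mixedDiff_of_sum_ridge hind hf (hzero i))
    have hridge : ContDiff ℝ s (∑ i, fun x => g i (a i ⬝ᵥ x)) := by
      rw [Finset.sum_fn]
      exact ContDiff.sum fun i _ => (hg i).comp (contDiff_dotProduct (a i))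
    have horder (t : Fin m → ι → ℝ) : mixedDiff t
        (∑ i, (fun x => F i (a i ⬝ᵥ x)) - ∑ i, fun x => g i (a i ⬝ᵥ x)) = 0 := by
      rw [← Finset.sum_sub_distrib, mixedDiff_sum]
      refine Finset.sum_eq_zero fun i _ => ?_
      refine (mixedDiff_ridge (a i) t (F i - g i)).trans ?_
      rw [hgF]
      rfl
    obtain ⟨P, hP, heval⟩ := exists_mvPolynomial_eval_eq_of_mixedDiff_eq_zero
      (hf.continuous.sub hridge.continuous) horder
    refine ⟨g, P, hg, hP, fun x => ?_⟩
    rw [← heval]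
    simp

end Ridge

/-- If `f ∈ Cˢ(ℝⁿ)` is a sum of arbitrarily behaved ridge functions with
pairwise linearly independent directions `a¹,...,aᵏ`, then it is a sum of
`Cˢ` ridge functions with the same directions plus a polynomial of total
degree at most `k - 1`. -/
theorem stmt11 {n k : ℕ} (s : ℕ) (a : Fin k → Fin n → ℝ)
    (hind : ∀ i j : Fin k, i ≠ j → LinearIndependent ℝ ![a i, a j])
    (f : (Fin n → ℝ) → ℝ) (hf : ContDiff ℝ (s : ℕ∞) f)
    (F : Fin k → ℝ → ℝ)
    (hrepr : ∀ x : Fin n → ℝ, f x = ∑ i, F i (∑ t, a i t * x t)) :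
    ∃ (g : Fin k → ℝ → ℝ) (P : MvPolynomial (Fin n) ℝ),
      (∀ i, ContDiff ℝ (s : ℕ∞) (g i)) ∧ P.totalDegree ≤ k - 1 ∧
      ∀ x : Fin n → ℝ, f x = (∑ i, g i (∑ t, a i t * x t)) + MvPolynomial.eval x P := by
  obtain ⟨g, P, hg, hP, hfP⟩ := stmt11_general a hind hf F hrepr
  exact ⟨g, P, hg, hP.trans (Nat.sub_le_sub_left one_le_two k), hfP⟩
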